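/- Weighted stability inequality: Let Σ ⊂ ℝⁿ⁺¹ be an entire graphical smooth self-shrinker. Then for every smooth compactly supported function η on ℝⁿ⁺¹, ∫_Σ η² |A|² e^{−|X|²/4} ≤ ∫_Σ |∇_Σ η|² e^{−|X|²/4}. -/

import Mathlib

open Real MeasureTheory Metric Filter
open scoped RealInnerProductSpace ENNReal NNReal

noncomputable section

abbrev E (n : ℕ) : Type := EuclideanSpace ℝ (Fin n)

variable {n : ℕ}

/-- `√(1 + |Du|²)`, the area element of the graph of `u`. -/
def aEl (u : E n → ℝ) (x : E n) : ℝ := Real.sqrt (1 + ‖gradient u x‖ ^ 2)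

/-- The vector field `Du/√(1+|Du|²)`. -/
def Vfield (u : E n → ℝ) (x : E n) : E n := (aEl u x)⁻¹ • gradient u x

/-- `div (Du/√(1+|Du|²))`. -/
def divV (u : E n → ℝ) (x : E n) : ℝ :=
  ∑ i, fderiv ℝ (fun y => Vfield u y i) x (EuclideanSpace.single i 1)

/-- The self-shrinker equation for an entire graph. -/
def ShrinkerEq (u : E n → ℝ) : Prop :=
  ∀ x, divV u x = (⟪x, gradient u x⟫ - u x) / (2 * aEl u x)

/-- The mean curvature of the graph of `u` with respect to the upward unit normal. -/
def meanCurv (u : E n → ℝ) (x : E n) : ℝ := -divV u x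

/-- The position vector `X = (x, u x)` of a point of the graph. -/
def Pos (u : E n → ℝ) (x : E n) : E (n + 1) :=
  (WithLp.equiv 2 (Fin (n + 1) → ℝ)).symm (Fin.snoc ((WithLp.equiv 2 (Fin n → ℝ)) x) (u x))

/-- The upward unit normal `n = (-Du, 1)/√(1+|Du|²)` at the point of the graph over `x`. -/
def NmlAt (u : E n → ℝ) (x : E n) : E (n + 1) :=
  (WithLp.equiv 2 (Fin (n + 1) → ℝ)).symm
    (Fin.snoc (fun i => -(Vfield u x i)) ((aEl u x)⁻¹))

/-- Projection of `ℝ^{n+1}` onto the first `n` coordinates. -/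
def projE (p : E (n + 1)) : E n :=
  (WithLp.equiv 2 (Fin n → ℝ)).symm fun i => p i.castSucc

/-- The unit normal of the graph, extended to `ℝ^{n+1}` independently of the last coordinate. -/
def Nml (u : E n → ℝ) (p : E (n + 1)) : E (n + 1) := NmlAt u (projE p)

/-- The inverse induced metric `g^{ij} = δ_{ij} - u_i u_j/(1+|Du|²)` of the graph. -/
def ginv (u : E n → ℝ) (x : E n) (i j : Fin n) : ℝ :=
  (if i = j then 1 else 0) - gradient u x i * gradient u x j / (aEl u x) ^ 2

/-- The Hessian `u_{ij}` of `u`. -/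
def hess (u : E n → ℝ) (x : E n) (i j : Fin n) : ℝ :=
  fderiv ℝ (fun y => gradient u y j) x (EuclideanSpace.single i 1)

/-- `|A|²`, the squared norm of the second fundamental form of the graph of `u`:
`|A|² = g^{ik} g^{jl} h_{ij} h_{kl}` with `h_{ij} = u_{ij}/√(1+|Du|²)`. -/
def A2 (u : E n → ℝ) (x : E n) : ℝ :=
  (∑ i, ∑ j, ∑ k, ∑ l, ginv u x i k * ginv u x j l * hess u x i j * hess u x k l) /
    (aEl u x) ^ 2

/-- Coordinate components `g^{ij} ∂_j f` of the tangential gradient. -/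
def gradCoord (u f : E n → ℝ) (x : E n) (i : Fin n) : ℝ :=
  ∑ j, ginv u x i j * gradient f x j

/-- The tangential gradient `∇_Σ f` (for `f` defined on the base, pulled back to the graph),
as a vector in `ℝ^{n+1}`. -/
def gradSigma (u f : E n → ℝ) (x : E n) : E (n + 1) :=
  (WithLp.equiv 2 (Fin (n + 1) → ℝ)).symm
    (Fin.snoc (fun i => gradCoord u f x i) (∑ i, gradient u x i * gradCoord u f x i))

/-- The Laplace–Beltrami operator of the graph:
`Δ_Σ f = (1/√g) ∂_i (√g g^{ij} ∂_j f)`. -/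
def lapSigma (u f : E n → ℝ) (x : E n) : ℝ :=
  (aEl u x)⁻¹ *
    ∑ i, fderiv ℝ (fun y => aEl u y * gradCoord u f y i) x (EuclideanSpace.single i 1)

/-- The tangential gradient `∇_Σ η` of an ambient function `η : ℝ^{n+1} → ℝ` along the graph:
the ambient gradient minus its normal component. -/
def gradSigmaAmb (u : E n → ℝ) (η : E (n + 1) → ℝ) (x : E n) : E (n + 1) :=
  gradient η (Pos u x) - ⟪gradient η (Pos u x), NmlAt u x⟫ • NmlAt u x

/-- `Vol(Σ ∩ B_R)`: the area of the part of the graph inside the ball of radius `R`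
in `ℝ^{n+1}`, computed by the area formula. -/
def sVol (u : E n → ℝ) (R : ℝ) : ℝ := ∫ x in {x : E n | ‖Pos u x‖ ≤ R}, aEl u x

/-- `M_R = sup_{|x| ≤ R} |u|`. -/
def supBall (u : E n → ℝ) (R : ℝ) : ℝ := ⨆ x : Metric.closedBall (0 : E n) R, |u x.1|

end

section PartialDerivatives

variable {n : ℕ}

/-- The partial derivative `∂_i f`. -/
noncomputable def partialDeriv (i : Fin n) (f : E n → ℝ) (x : E n) : ℝ :=
  fderiv ℝ f x (EuclideanSpace.single i 1)

lemma ContDiff.partialDeriv {f : E n → ℝ} (hf : ContDiff ℝ (⊤ : ℕ∞) f) (i : Fin n) :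
    ContDiff ℝ (⊤ : ℕ∞) (partialDeriv i f) :=
  (hf.fderiv_right (m := (⊤ : ℕ∞)) (by simp)).clm_apply contDiff_const

lemma ContDiff.differentiableAt_of_top {f : E n → ℝ} (hf : ContDiff ℝ (⊤ : ℕ∞) f) (x : E n) :
    DifferentiableAt ℝ f x :=
  (hf.differentiable (by simp)).differentiableAt

lemma partialDeriv_mul {f g : E n → ℝ} (hf : ContDiff ℝ (⊤ : ℕ∞) f)
    (hg : ContDiff ℝ (⊤ : ℕ∞) g) (i : Fin n) (x : E n) :
    partialDeriv i (fun y => f y * g y) x =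
      partialDeriv i f x * g x + f x * partialDeriv i g x := by
  unfold partialDeriv
  rw [fderiv_fun_mul (hf.differentiableAt_of_top x) (hg.differentiableAt_of_top x)]
  simp only [_root_.add_apply, _root_.smul_apply, smul_eq_mul]
  ring

lemma partialDeriv_sum {ι : Type*} (s : Finset ι) {f : ι → E n → ℝ}
    (hf : ∀ k ∈ s, ContDiff ℝ (⊤ : ℕ∞) (f k)) (i : Fin n) (x : E n) :
    partialDeriv i (fun y => ∑ k ∈ s, f k y) x = ∑ k ∈ s, partialDeriv i (f k) x := by
  unfold partialDeriv
  rw [fderiv_fun_sum fun k hk => (hf k hk).differentiableAt_of_top x]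
  simp

lemma partialDeriv_add {f g : E n → ℝ} (hf : ContDiff ℝ (⊤ : ℕ∞) f)
    (hg : ContDiff ℝ (⊤ : ℕ∞) g) (i : Fin n) (x : E n) :
    partialDeriv i (fun y => f y + g y) x = partialDeriv i f x + partialDeriv i g x := by
  unfold partialDeriv
  rw [fderiv_fun_add (hf.differentiableAt_of_top x) (hg.differentiableAt_of_top x)]
  simp

lemma partialDeriv_sub {f g : E n → ℝ} (hf : ContDiff ℝ (⊤ : ℕ∞) f)
    (hg : ContDiff ℝ (⊤ : ℕ∞) g) (i : Fin n) (x : E n) :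
    partialDeriv i (fun y => f y - g y) x = partialDeriv i f x - partialDeriv i g x := by
  unfold partialDeriv
  rw [fderiv_fun_sub (hf.differentiableAt_of_top x) (hg.differentiableAt_of_top x)]
  simp

lemma partialDeriv_const (c : ℝ) (i : Fin n) (x : E n) :
    partialDeriv i (fun _ => c) x = 0 := by
  simp [partialDeriv]

lemma contDiff_coord (j : Fin n) : ContDiff ℝ (⊤ : ℕ∞) fun y : E n => y j :=
  (EuclideanSpace.proj (𝕜 := ℝ) j).contDiff

lemma partialDeriv_coord (i j : Fin n) (x : E n) :
    partialDeriv i (fun y : E n => y j) x = if j = i then 1 else 0 := by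
  have h : (fun y : E n => y j) = EuclideanSpace.proj (𝕜 := ℝ) j := rfl
  rw [partialDeriv, h, ContinuousLinearMap.fderiv]
  simp

lemma partialDeriv_exp {f : E n → ℝ} (hf : ContDiff ℝ (⊤ : ℕ∞) f) (i : Fin n) (x : E n) :
    partialDeriv i (fun y => Real.exp (f y)) x = Real.exp (f x) * partialDeriv i f x := by
  unfold partialDeriv
  rw [fderiv_exp (hf.differentiableAt_of_top x)]
  simp

lemma partialDeriv_comm {f : E n → ℝ} (hf : ContDiff ℝ (⊤ : ℕ∞) f) (i j : Fin n) (x : E n) :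
    partialDeriv i (partialDeriv j f) x = partialDeriv j (partialDeriv i f) x := by
  have hd : DifferentiableAt ℝ (fderiv ℝ f) x :=
    ((hf.fderiv_right (m := (⊤ : ℕ∞)) (by simp)).differentiable (by simp)).differentiableAt
  have key : ∀ v w : E n, fderiv ℝ (fun y => fderiv ℝ f y v) x w =
      fderiv ℝ (fderiv ℝ f) x w v := by
    intro v w
    rw [fderiv_clm_apply hd (differentiableAt_const v)]
    simp
  have hsymm : IsSymmSndFDerivAt ℝ f x :=
    hf.contDiffAt.isSymmSndFDerivAt (by
      rw [minSmoothness_of_isRCLikeNormedField]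
      exact WithTop.coe_le_coe.2 le_top)
  change fderiv ℝ (fun y => fderiv ℝ f y _) x _ = fderiv ℝ (fun y => fderiv ℝ f y _) x _
  rw [key, key]
  exact hsymm _ _

lemma gradient_apply_eq_partialDeriv {m : ℕ} (f : E m → ℝ) (x : E m) (i : Fin m) :
    gradient f x i = partialDeriv i f x := by
  unfold partialDeriv
  rw [← toDual_gradient, InnerProductSpace.toDual_apply_apply, EuclideanSpace.inner_single_right]
  simp

lemma fderiv_apply_eq_sum_gradient {m : ℕ} (f : E m → ℝ) (x v : E m) :
    fderiv ℝ f x v = ∑ i, gradient f x i * v i := by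
  rw [← toDual_gradient, InnerProductSpace.toDual_apply_apply, PiLp.inner_apply]
  simp [mul_comm]

/-- A partial derivative of a compactly supported smooth function integrates to zero. -/
lemma integral_partialDeriv_eq_zero {f : E n → ℝ} (hf : ContDiff ℝ (⊤ : ℕ∞) f)
    (hc : HasCompactSupport f) (i : Fin n) : ∫ x, partialDeriv i f x = 0 := by
  have hint : Integrable (partialDeriv i f) :=
    (hf.partialDeriv i).continuous.integrable_of_hasCompactSupport
      (hc.fderiv_apply (𝕜 := ℝ) _)
  have h := integral_mul_fderiv_eq_neg_fderiv_mul_of_integrable (μ := volume) (f := f)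
    (g := fun _ => (1 : ℝ)) (v := EuclideanSpace.single i (1 : ℝ))
    (by simp only [mul_one]; exact hint) (by simp)
    (by simpa using hf.continuous.integrable_of_hasCompactSupport hc)
    (fun x _ => hf.differentiableAt_of_top x) (fun x _ => differentiableAt_const _)
  simpa [partialDeriv] using h

end PartialDerivatives

section GraphGeometry

variable {n : ℕ} {u : E n → ℝ}

lemma aEl_pos (u : E n → ℝ) (x : E n) : 0 < aEl u x :=
  Real.sqrt_pos.2 (by positivity)

lemma aEl_sq (u : E n → ℝ) (x : E n) :
    aEl u x ^ 2 = 1 + ∑ i, partialDeriv i u x ^ 2 := by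
  rw [aEl, Real.sq_sqrt (by positivity), EuclideanSpace.norm_sq_eq]
  simp [gradient_apply_eq_partialDeriv]

lemma aEl_mul_Vfield (u : E n → ℝ) (x : E n) (i : Fin n) :
    aEl u x * Vfield u x i = partialDeriv i u x := by
  have := (aEl_pos u x).ne'
  simp only [Vfield, PiLp.smul_apply, smul_eq_mul, gradient_apply_eq_partialDeriv]
  field_simp

lemma sum_Vfield_sq (u : E n → ℝ) (x : E n) :
    aEl u x ^ 2 * ∑ i, Vfield u x i ^ 2 = aEl u x ^ 2 - 1 := by
  rw [Finset.mul_sum]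
  simp_rw [← mul_pow, aEl_mul_Vfield]
  rw [aEl_sq]
  ring

lemma contDiff_aEl (hu : ContDiff ℝ (⊤ : ℕ∞) u) : ContDiff ℝ (⊤ : ℕ∞) (aEl u) := by
  have h : aEl u = fun x => Real.sqrt (1 + ∑ i, partialDeriv i u x ^ 2) := by
    funext x
    rw [← aEl_sq, Real.sqrt_sq (aEl_pos u x).le]
  rw [h]
  refine ContDiff.sqrt (contDiff_const.add (ContDiff.sum fun i _ => (hu.partialDeriv i).pow 2)) ?_
  intro x
  rw [← aEl_sq]
  exact (pow_pos (aEl_pos u x) 2).ne'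

lemma contDiff_Vfield_apply (hu : ContDiff ℝ (⊤ : ℕ∞) u) (i : Fin n) :
    ContDiff ℝ (⊤ : ℕ∞) fun y => Vfield u y i := by
  have h : (fun y => Vfield u y i) = fun y => (aEl u y)⁻¹ * partialDeriv i u y := by
    funext y
    simp [Vfield, gradient_apply_eq_partialDeriv]
  rw [h]
  exact ((contDiff_aEl hu).inv fun x => (aEl_pos u x).ne').mul (hu.partialDeriv i)

lemma hess_eq_partialDeriv (u : E n → ℝ) (x : E n) (i j : Fin n) :
    hess u x i j = partialDeriv i (partialDeriv j u) x := by
  simp only [hess, gradient_apply_eq_partialDeriv]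
  rfl

lemma hess_symm (hu : ContDiff ℝ (⊤ : ℕ∞) u) (x : E n) (i j : Fin n) :
    hess u x i j = hess u x j i := by
  rw [hess_eq_partialDeriv, hess_eq_partialDeriv, partialDeriv_comm hu]

lemma hess_eq_aEl_Vfield (hu : ContDiff ℝ (⊤ : ℕ∞) u) (x : E n) (k i : Fin n) :
    hess u x k i = partialDeriv k (aEl u) x * Vfield u x i +
      aEl u x * partialDeriv k (fun y => Vfield u y i) x := by
  rw [hess_eq_partialDeriv, ← partialDeriv_mul (contDiff_aEl hu) (contDiff_Vfield_apply hu i)]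
  simp only [aEl_mul_Vfield]

lemma partialDeriv_aEl (hu : ContDiff ℝ (⊤ : ℕ∞) u) (x : E n) (k : Fin n) :
    partialDeriv k (aEl u) x = ∑ j, Vfield u x j * hess u x k j := by
  have ha := contDiff_aEl hu
  have h : (fun y => aEl u y * aEl u y) =
      fun y => 1 + ∑ i, partialDeriv i u y * partialDeriv i u y := by
    funext y
    simpa only [pow_two] using aEl_sq u y
  have h2 := congrArg (fun f => partialDeriv k f x) h
  rw [partialDeriv_mul ha ha, partialDeriv_add contDiff_const
    (ContDiff.sum fun i _ => (hu.partialDeriv i).mul (hu.partialDeriv i)), partialDeriv_const,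
    partialDeriv_sum _ fun i _ => (hu.partialDeriv i).mul (hu.partialDeriv i)] at h2
  simp only [partialDeriv_mul (hu.partialDeriv _) (hu.partialDeriv _),
    ← hess_eq_partialDeriv] at h2
  simp only [← aEl_mul_Vfield u x] at h2
  have h3 : aEl u x * partialDeriv k (aEl u) x =
      aEl u x * ∑ j, Vfield u x j * hess u x k j := by
    rw [Finset.mul_sum]
    have : ∀ j, hess u x k j * (aEl u x * Vfield u x j) + aEl u x * Vfield u x j * hess u x k j =
        2 * (aEl u x * (Vfield u x j * hess u x k j)) := fun j => by ring
    simp only [this, ← Finset.mul_sum] at h2 ⊢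
    linarith
  exact mul_left_cancel₀ (aEl_pos u x).ne' h3

/-- `DV · V`, which is minus the tangential gradient of `log ⟪N, e_{n+1}⟫` in coordinates. -/
noncomputable def logTilt (u : E n → ℝ) (x : E n) (i : Fin n) : ℝ :=
  ∑ k, partialDeriv k (fun y => Vfield u y i) x * Vfield u x k

lemma contDiff_logTilt (hu : ContDiff ℝ (⊤ : ℕ∞) u) (i : Fin n) :
    ContDiff ℝ (⊤ : ℕ∞) fun y => logTilt u y i :=
  ContDiff.sum fun k _ =>
    ((contDiff_Vfield_apply hu i).partialDeriv k).mul (contDiff_Vfield_apply hu k)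

lemma aEl_mul_logTilt (hu : ContDiff ℝ (⊤ : ℕ∞) u) (x : E n) (i : Fin n) :
    aEl u x * logTilt u x i = partialDeriv i (aEl u) x -
      Vfield u x i * ∑ k, Vfield u x k * partialDeriv k (aEl u) x := by
  rw [logTilt, Finset.mul_sum, partialDeriv_aEl hu, Finset.mul_sum, ← Finset.sum_sub_distrib]
  refine Finset.sum_congr rfl fun k _ => ?_
  rw [hess_symm hu, hess_eq_aEl_Vfield hu]
  ring

lemma ginv_eq (u : E n → ℝ) (x : E n) (i j : Fin n) :
    ginv u x i j = (if i = j then 1 else 0) - Vfield u x i * Vfield u x j := by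
  have := (aEl_pos u x).ne'
  rw [ginv, gradient_apply_eq_partialDeriv, gradient_apply_eq_partialDeriv, ← aEl_mul_Vfield,
    ← aEl_mul_Vfield]
  field_simp

lemma sum_ginv_hess (hu : ContDiff ℝ (⊤ : ℕ∞) u) (x : E n) (j k : Fin n) :
    ∑ l, ginv u x j l * hess u x k l =
      aEl u x * partialDeriv k (fun y => Vfield u y j) x := by
  simp only [ginv_eq, sub_mul, Finset.sum_sub_distrib, ite_mul, one_mul, zero_mul,
    Finset.sum_ite_eq, Finset.mem_univ, if_true, mul_assoc, ← Finset.mul_sum,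
    ← partialDeriv_aEl hu]
  rw [hess_eq_aEl_Vfield hu]
  ring

lemma A2_eq (hu : ContDiff ℝ (⊤ : ℕ∞) u) (x : E n) :
    A2 u x = ∑ j, ∑ k, partialDeriv k (fun y => Vfield u y j) x *
      partialDeriv j (fun y => Vfield u y k) x := by
  have ha := (aEl_pos u x).ne'
  rw [A2, div_eq_iff (pow_ne_zero 2 ha), Finset.sum_comm, Finset.sum_mul]
  refine Finset.sum_congr rfl fun j _ => ?_
  rw [Finset.sum_comm, Finset.sum_mul]
  refine Finset.sum_congr rfl fun k _ => ?_
  calc ∑ i, ∑ l, ginv u x i k * ginv u x j l * hess u x i j * hess u x k l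
      = (∑ i, ginv u x k i * hess u x j i) * ∑ l, ginv u x j l * hess u x k l := by
        rw [Finset.sum_mul_sum]
        refine Finset.sum_congr rfl fun i _ => Finset.sum_congr rfl fun l _ => ?_
        rw [hess_symm hu x i j, show ginv u x i k = ginv u x k i by
          rw [ginv_eq, ginv_eq, mul_comm]; simp only [eq_comm]]
        ring
    _ = _ := by
        rw [sum_ginv_hess hu, sum_ginv_hess hu]
        ring

lemma Pos_castSucc (u : E n → ℝ) (x : E n) (i : Fin n) : Pos u x i.castSucc = x i := by
  simp [Pos]

lemma Pos_last (u : E n → ℝ) (x : E n) : Pos u x (Fin.last n) = u x := by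
  simp [Pos]

lemma norm_Pos_sq (u : E n → ℝ) (x : E n) : ‖Pos u x‖ ^ 2 = ∑ i, x i * x i + u x * u x := by
  rw [EuclideanSpace.norm_sq_eq, Fin.sum_univ_castSucc]
  simp only [Pos_castSucc, Pos_last, Real.norm_eq_abs, sq_abs, ← pow_two]

lemma norm_le_norm_Pos (u : E n → ℝ) (x : E n) : ‖x‖ ≤ ‖Pos u x‖ := by
  refine le_of_sq_le_sq ?_ (norm_nonneg _)
  rw [norm_Pos_sq, EuclideanSpace.norm_sq_eq]
  simp only [Real.norm_eq_abs, sq_abs, ← pow_two]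
  nlinarith [sq_nonneg (u x)]

lemma contDiff_Pos (hu : ContDiff ℝ (⊤ : ℕ∞) u) : ContDiff ℝ (⊤ : ℕ∞) (Pos u) := by
  rw [contDiff_euclidean]
  intro i
  refine Fin.lastCases ?_ (fun j => ?_) i
  · simpa only [Pos_last] using hu
  · simpa only [Pos_castSucc] using contDiff_coord j

lemma hasCompactSupport_comp_Pos (u : E n → ℝ) {η : E (n + 1) → ℝ}
    (hη : HasCompactSupport η) : HasCompactSupport fun x => η (Pos u x) := by
  obtain ⟨R, hR⟩ := hη.isCompact.isBounded.exists_norm_le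
  refine HasCompactSupport.intro (isCompact_closedBall (0 : E n) R) fun x hx => ?_
  by_contra hne
  refine hx (mem_closedBall_zero_iff.2 ?_)
  exact (norm_le_norm_Pos u x).trans (hR _ (subset_tsupport η hne))

lemma partialDeriv_comp_Pos (hu : ContDiff ℝ (⊤ : ℕ∞) u) {η : E (n + 1) → ℝ}
    (hη : ContDiff ℝ (⊤ : ℕ∞) η) (x : E n) (i : Fin n) :
    partialDeriv i (fun y => η (Pos u y)) x = gradient η (Pos u x) i.castSucc +
      gradient η (Pos u x) (Fin.last n) * partialDeriv i u x := by
  have hP : DifferentiableAt ℝ (Pos u) x :=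
    ((contDiff_Pos hu).differentiable (by simp)).differentiableAt
  have hcoord : ∀ j, fderiv ℝ (Pos u) x (EuclideanSpace.single i 1) j =
      partialDeriv i (fun y => Pos u y j) x := by
    intro j
    have h := (hasFDerivWithinAt_euclidean.1 hP.hasFDerivAt.hasFDerivWithinAt j).hasFDerivAt
      Filter.univ_mem
    rw [partialDeriv, h.fderiv]
    rfl
  have hchain : fderiv ℝ (fun y => η (Pos u y)) x = (fderiv ℝ η (Pos u x)).comp
      (fderiv ℝ (Pos u) x) :=
    fderiv_comp x (hη.differentiableAt_of_top _) hP
  rw [partialDeriv, hchain, ContinuousLinearMap.comp_apply, fderiv_apply_eq_sum_gradient,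
    Fin.sum_univ_castSucc]
  simp only [hcoord, Pos_castSucc, Pos_last, partialDeriv_coord]
  simp

/-- The quadratic form `g^{ij} v_i v_j` of the inverse induced metric. -/
noncomputable def cometric (u : E n → ℝ) (x : E n) (v : Fin n → ℝ) : ℝ :=
  ∑ i, v i ^ 2 - (∑ i, Vfield u x i * v i) ^ 2

lemma cometric_nonneg (u : E n → ℝ) (x : E n) (v : Fin n → ℝ) : 0 ≤ cometric u x v := by
  have hcs := Finset.sum_mul_sq_le_sq_mul_sq Finset.univ (fun i => Vfield u x i) v
  have hV : ∑ i, Vfield u x i ^ 2 ≤ 1 := by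
    have := sum_Vfield_sq u x
    have ha := pow_pos (aEl_pos u x) 2
    nlinarith
  have hv : 0 ≤ ∑ i, v i ^ 2 := Finset.sum_nonneg fun i _ => sq_nonneg _
  unfold cometric
  nlinarith [mul_le_mul_of_nonneg_right hV hv]

lemma norm_gradSigmaAmb_sq (hu : ContDiff ℝ (⊤ : ℕ∞) u) {η : E (n + 1) → ℝ}
    (hη : ContDiff ℝ (⊤ : ℕ∞) η) (x : E n) :
    ‖gradSigmaAmb u η x‖ ^ 2 =
      cometric u x fun i => partialDeriv i (fun y => η (Pos u y)) x := by
  have ha := (aEl_pos u x).ne'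
  have hV := sum_Vfield_sq u x
  have hNc : ∀ i : Fin n, NmlAt u x i.castSucc = -Vfield u x i := fun i => by simp [NmlAt]
  have hNl : NmlAt u x (Fin.last n) = (aEl u x)⁻¹ := by simp [NmlAt]
  have hN : ⟪NmlAt u x, NmlAt u x⟫ = 1 := by
    rw [PiLp.inner_apply, Fin.sum_univ_castSucc]
    simp only [hNc, hNl, RCLike.inner_apply, conj_trivial, ← pow_two]
    field_simp
    linarith
  unfold gradSigmaAmb cometric
  simp only [partialDeriv_comp_Pos hu hη, ← aEl_mul_Vfield]
  generalize gradient η (Pos u x) = G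
  rw [← real_inner_self_eq_norm_sq, inner_sub_left, inner_sub_right, inner_sub_right,
    real_inner_smul_left, real_inner_smul_left, real_inner_smul_right, real_inner_smul_right, hN,
    real_inner_comm G (NmlAt u x)]
  have hGG : ⟪G, G⟫ = ∑ i : Fin n, G i.castSucc ^ 2 + G (Fin.last n) ^ 2 := by
    rw [PiLp.inner_apply, Fin.sum_univ_castSucc]
    simp [pow_two]
  have hGN : ⟪G, NmlAt u x⟫ = -∑ i : Fin n, Vfield u x i * G i.castSucc +
      (aEl u x)⁻¹ * G (Fin.last n) := by
    rw [PiLp.inner_apply, Fin.sum_univ_castSucc]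
    simp [hNc, hNl]
  have h1 : ∑ i : Fin n, (G i.castSucc + G (Fin.last n) * (aEl u x * Vfield u x i)) ^ 2 =
      ∑ i : Fin n, G i.castSucc ^ 2 +
        2 * G (Fin.last n) * aEl u x * ∑ i : Fin n, Vfield u x i * G i.castSucc +
        G (Fin.last n) ^ 2 * (aEl u x ^ 2 * ∑ i, Vfield u x i ^ 2) := by
    simp only [Finset.mul_sum, ← Finset.sum_add_distrib]
    exact Finset.sum_congr rfl fun i _ => by ring
  have h2 : ∑ i : Fin n, Vfield u x i *
        (G i.castSucc + G (Fin.last n) * (aEl u x * Vfield u x i)) =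
      ∑ i : Fin n, Vfield u x i * G i.castSucc +
        G (Fin.last n) * (aEl u x)⁻¹ * (aEl u x ^ 2 * ∑ i, Vfield u x i ^ 2) := by
    simp only [Finset.mul_sum, ← Finset.sum_add_distrib]
    exact Finset.sum_congr rfl fun i _ => by field_simp
  rw [h1, h2, hV, hGG, hGN]
  field_simp
  ring

end GraphGeometry

section Stability

variable {n : ℕ} {u : E n → ℝ}

lemma contDiff_neg_norm_Pos_sq (hu : ContDiff ℝ (⊤ : ℕ∞) u) :
    ContDiff ℝ (⊤ : ℕ∞) fun x => -‖Pos u x‖ ^ 2 / 4 :=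
  ((contDiff_Pos hu).norm_sq ℝ).neg.div_const 4

/-- The Gaussian weight `e^{-|X|²/4}` along the graph. -/
noncomputable def gaussWeight (u : E n → ℝ) (x : E n) : ℝ := Real.exp (-‖Pos u x‖ ^ 2 / 4)

lemma contDiff_gaussWeight (hu : ContDiff ℝ (⊤ : ℕ∞) u) :
    ContDiff ℝ (⊤ : ℕ∞) (gaussWeight u) :=
  (contDiff_neg_norm_Pos_sq hu).exp

lemma partialDeriv_gaussWeight (hu : ContDiff ℝ (⊤ : ℕ∞) u) (x : E n) (i : Fin n) :
    partialDeriv i (gaussWeight u) x =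
      -(gaussWeight u x * (x i + u x * (aEl u x * Vfield u x i)) / 2) := by
  have hcoord : ∀ j ∈ Finset.univ, ContDiff ℝ (⊤ : ℕ∞) fun y : E n => y j * y j :=
    fun j _ => (contDiff_coord j).mul (contDiff_coord j)
  have h : (fun y => -‖Pos u y‖ ^ 2 / 4) =
      fun y => (-1 / 4 : ℝ) * (∑ j, y j * y j + u y * u y) := by
    funext y
    rw [norm_Pos_sq]
    ring
  change partialDeriv i (fun y => Real.exp (-‖Pos u y‖ ^ 2 / 4)) x = _
  rw [partialDeriv_exp (contDiff_neg_norm_Pos_sq hu), h,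
    partialDeriv_mul contDiff_const ((ContDiff.sum hcoord).add (hu.mul hu)), partialDeriv_const,
    partialDeriv_add (ContDiff.sum hcoord) (hu.mul hu), partialDeriv_sum _ hcoord,
    partialDeriv_mul hu hu, aEl_mul_Vfield]
  simp only [partialDeriv_mul (contDiff_coord _) (contDiff_coord _), partialDeriv_coord, ite_mul,
    mul_ite, one_mul, mul_one, zero_mul, mul_zero, Finset.sum_add_distrib, Finset.sum_ite_eq',
    Finset.mem_univ, if_true, gaussWeight]
  ring

lemma ShrinkerEq.two_mul_aEl_mul_divV (hshr : ShrinkerEq u) (x : E n) :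
    2 * aEl u x * divV u x = ∑ j, x j * partialDeriv j u x - u x := by
  have ha := (aEl_pos u x).ne'
  rw [hshr x, mul_div_cancel₀ _ (by positivity), PiLp.inner_apply]
  simp [gradient_apply_eq_partialDeriv, mul_comm]

lemma contDiff_divV (hu : ContDiff ℝ (⊤ : ℕ∞) u) : ContDiff ℝ (⊤ : ℕ∞) (divV u) :=
  ContDiff.sum fun i _ => (contDiff_Vfield_apply hu i).partialDeriv i

lemma ShrinkerEq.partialDeriv_divV (hu : ContDiff ℝ (⊤ : ℕ∞) u) (hshr : ShrinkerEq u)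
    (x : E n) (k : Fin n) :
    2 * (partialDeriv k (aEl u) x * divV u x + aEl u x * partialDeriv k (divV u) x) =
      ∑ j, x j * hess u x k j := by
  have ha := contDiff_aEl hu
  have hd := contDiff_divV hu
  have hs : ∀ j ∈ Finset.univ, ContDiff ℝ (⊤ : ℕ∞) fun y : E n => y j * partialDeriv j u y :=
    fun j _ => (contDiff_coord j).mul (hu.partialDeriv j)
  have h : (fun y => (2 : ℝ) * (aEl u y * divV u y)) =
      fun y => ∑ j, y j * partialDeriv j u y - u y := by
    funext y
    rw [← hshr.two_mul_aEl_mul_divV, mul_assoc]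
  have h2 := congrArg (fun f => partialDeriv k f x) h
  rw [partialDeriv_mul contDiff_const (ha.mul hd), partialDeriv_const, partialDeriv_mul ha hd,
    partialDeriv_sub (ContDiff.sum hs) hu, partialDeriv_sum _ hs] at h2
  simp only [partialDeriv_mul (contDiff_coord _) (hu.partialDeriv _), partialDeriv_coord, ite_mul,
    one_mul, zero_mul, Finset.sum_add_distrib, Finset.sum_ite_eq', Finset.mem_univ,
    if_true, ← hess_eq_partialDeriv] at h2
  linarith

lemma sum_partialDeriv_logTilt (hu : ContDiff ℝ (⊤ : ℕ∞) u) (x : E n) :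
    ∑ i, partialDeriv i (fun y => logTilt u y i) x =
      A2 u x + ∑ k, Vfield u x k * partialDeriv k (divV u) x := by
  have hV := contDiff_Vfield_apply hu
  have h1 : ∀ i, partialDeriv i (fun y => logTilt u y i) x =
      ∑ k, (partialDeriv i (partialDeriv k fun y => Vfield u y i) x * Vfield u x k +
        partialDeriv k (fun y => Vfield u y i) x * partialDeriv i (fun y => Vfield u y k) x) := by
    intro i
    simp only [logTilt]
    rw [partialDeriv_sum _ fun k _ => ((hV i).partialDeriv k).mul (hV k)]
    exact Finset.sum_congr rfl fun k _ => partialDeriv_mul ((hV i).partialDeriv k) (hV k) i x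
  have h2 : ∀ k, partialDeriv k (divV u) x =
      ∑ i, partialDeriv i (partialDeriv k fun y => Vfield u y i) x := by
    intro k
    rw [show divV u = fun y => ∑ i, partialDeriv i (fun z => Vfield u z i) y from rfl,
      partialDeriv_sum _ fun i _ => (hV i).partialDeriv i]
    exact Finset.sum_congr rfl fun i _ => partialDeriv_comm (hV i) _ _ _
  simp only [h1, h2, Finset.sum_add_distrib, A2_eq hu, Finset.mul_sum]
  rw [add_comm, Finset.sum_comm (f := fun i k =>
    partialDeriv i (partialDeriv k fun y => Vfield u y i) x * Vfield u x k)]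
  simp only [mul_comm (Vfield u x _)]

/-- The drift Laplacian identity for the logarithm of the tilt function of a self-shrinker. -/
lemma ShrinkerEq.weighted_divergence_logTilt (hu : ContDiff ℝ (⊤ : ℕ∞) u) (hshr : ShrinkerEq u)
    (x : E n) :
    ∑ i, partialDeriv i (fun y => gaussWeight u y * (aEl u y * logTilt u y i)) x =
      gaussWeight u x * (aEl u x * A2 u x +
        ∑ i, partialDeriv i (aEl u) x * logTilt u x i) := by
  have ha := contDiff_aEl hu
  have hW := contDiff_logTilt hu
  have hρ := contDiff_gaussWeight hu
  have ha0 := (aEl_pos u x).ne'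
  have hterm : ∀ i, partialDeriv i (fun y => gaussWeight u y * (aEl u y * logTilt u y i)) x =
      -(gaussWeight u x * (x i + u x * (aEl u x * Vfield u x i)) / 2) *
          (partialDeriv i (aEl u) x -
            Vfield u x i * ∑ k, Vfield u x k * partialDeriv k (aEl u) x) +
        gaussWeight u x * (partialDeriv i (aEl u) x * logTilt u x i +
          aEl u x * partialDeriv i (fun y => logTilt u y i) x) := by
    intro i
    rw [partialDeriv_mul hρ (ha.mul (hW i)), partialDeriv_mul ha (hW i),
      partialDeriv_gaussWeight hu, aEl_mul_logTilt hu]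
  simp only [hterm, Finset.sum_add_distrib, ← Finset.mul_sum, sum_partialDeriv_logTilt hu]
  set c := ∑ k, Vfield u x k * partialDeriv k (aEl u) x with hc
  have hdrift : ∑ i, -(gaussWeight u x * (x i + u x * (aEl u x * Vfield u x i)) / 2) *
        (partialDeriv i (aEl u) x - Vfield u x i * c) =
      -(gaussWeight u x / 2) * (∑ i, x i * partialDeriv i (aEl u) x -
        c * ∑ i, x i * Vfield u x i + u x * aEl u x * (c - c * ∑ i, Vfield u x i ^ 2)) := by
    nth_rewrite 3 [hc]
    simp only [Finset.mul_sum, ← Finset.sum_add_distrib, ← Finset.sum_sub_distrib]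
    exact Finset.sum_congr rfl fun i _ => by ring
  have hdiv : 2 * (c * divV u x + aEl u x * ∑ k, Vfield u x k * partialDeriv k (divV u) x) =
      ∑ i, x i * partialDeriv i (aEl u) x := by
    have h : ∀ k, 2 * (Vfield u x k * partialDeriv k (aEl u) x * divV u x +
        aEl u x * (Vfield u x k * partialDeriv k (divV u) x)) =
        ∑ j, x j * (Vfield u x k * hess u x j k) := by
      intro k
      have hk := hshr.partialDeriv_divV hu x k
      simp only [hess_symm hu x k] at hk
      calc _ = Vfield u x k * (2 * (partialDeriv k (aEl u) x * divV u x +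
            aEl u x * partialDeriv k (divV u) x)) := by ring
        _ = _ := by
          rw [hk, Finset.mul_sum]
          exact Finset.sum_congr rfl fun j _ => by ring
    rw [hc, Finset.sum_mul, Finset.mul_sum, ← Finset.sum_add_distrib, Finset.mul_sum,
      Finset.sum_congr rfl fun k _ => h k, Finset.sum_comm]
    simp only [← Finset.mul_sum, ← partialDeriv_aEl hu]
  have heq : 2 * aEl u x * divV u x = aEl u x * ∑ i, x i * Vfield u x i - u x := by
    rw [hshr.two_mul_aEl_mul_divV, Finset.mul_sum]
    simp only [← aEl_mul_Vfield]
    congr 1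
    exact Finset.sum_congr rfl fun i _ => by ring
  have hVV := sum_Vfield_sq u x
  rw [hdrift, ← hdiv]
  generalize ∑ i, Vfield u x i ^ 2 = s at *
  generalize ∑ i, x i * Vfield u x i = t at *
  generalize divV u x = d at *
  refine mul_left_cancel₀ ha0 ?_
  linear_combination (-gaussWeight u x * c / 2) * heq + (gaussWeight u x * u x * c / 2) * hVV

/-- Positivity of the cometric at `Dφ + φ Da / a`. -/
lemma cometric_log_bound (hu : ContDiff ℝ (⊤ : ℕ∞) u) (x : E n) (φ : ℝ) (v : Fin n → ℝ) :
    0 ≤ aEl u x * cometric u x v + φ ^ 2 * ∑ i, partialDeriv i (aEl u) x * logTilt u x i +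
      2 * φ * ∑ i, v i * (aEl u x * logTilt u x i) := by
  have ha := aEl_pos u x
  have h := mul_nonneg ha.le
    (cometric_nonneg u x fun i => v i + φ / aEl u x * partialDeriv i (aEl u) x)
  refine h.trans_eq (Eq.symm ?_)
  have hD : ∑ i, partialDeriv i (aEl u) x * logTilt u x i =
      (aEl u x)⁻¹ * ∑ i, partialDeriv i (aEl u) x * (aEl u x * logTilt u x i) := by
    rw [Finset.mul_sum]
    exact Finset.sum_congr rfl fun i _ => by field_simp
  rw [hD]
  simp only [aEl_mul_logTilt hu]
  set c := ∑ k, Vfield u x k * partialDeriv k (aEl u) x with hc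
  have e1 : ∑ i, partialDeriv i (aEl u) x * (partialDeriv i (aEl u) x - Vfield u x i * c) =
      ∑ i, partialDeriv i (aEl u) x ^ 2 - c ^ 2 := by
    rw [pow_two c]
    nth_rewrite 2 [hc]
    rw [Finset.sum_mul, ← Finset.sum_sub_distrib]
    exact Finset.sum_congr rfl fun i _ => by ring
  have e2 : ∑ i, v i * (partialDeriv i (aEl u) x - Vfield u x i * c) =
      ∑ i, v i * partialDeriv i (aEl u) x - (∑ i, Vfield u x i * v i) * c := by
    rw [Finset.sum_mul, ← Finset.sum_sub_distrib]
    exact Finset.sum_congr rfl fun i _ => by ring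
  have e3 : ∑ i, (v i + φ / aEl u x * partialDeriv i (aEl u) x) ^ 2 =
      ∑ i, v i ^ 2 + 2 * (φ / aEl u x) * ∑ i, v i * partialDeriv i (aEl u) x +
        (φ / aEl u x) ^ 2 * ∑ i, partialDeriv i (aEl u) x ^ 2 := by
    simp only [Finset.mul_sum, ← Finset.sum_add_distrib]
    exact Finset.sum_congr rfl fun i _ => by ring
  have e4 : ∑ i, Vfield u x i * (v i + φ / aEl u x * partialDeriv i (aEl u) x) =
      ∑ i, Vfield u x i * v i + φ / aEl u x * c := by
    rw [hc, Finset.mul_sum, ← Finset.sum_add_distrib]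
    exact Finset.sum_congr rfl fun i _ => by ring
  unfold cometric
  rw [e1, e2, e3, e4]
  field_simp
  ring

lemma ShrinkerEq.stability_pointwise (hu : ContDiff ℝ (⊤ : ℕ∞) u) (hshr : ShrinkerEq u)
    {φ : E n → ℝ} (hφ : ContDiff ℝ (⊤ : ℕ∞) φ) (x : E n) :
    φ x ^ 2 * A2 u x * gaussWeight u x * aEl u x ≤
      ∑ i, partialDeriv i
        (fun y => φ y * (φ y * (gaussWeight u y * (aEl u y * logTilt u y i)))) x +
      cometric u x (fun i => partialDeriv i φ x) * gaussWeight u x * aEl u x := by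
  have hF : ∀ i, ContDiff ℝ (⊤ : ℕ∞) fun y => gaussWeight u y * (aEl u y * logTilt u y i) :=
    fun i => (contDiff_gaussWeight hu).mul ((contDiff_aEl hu).mul (contDiff_logTilt hu i))
  have hterm : ∀ i, partialDeriv i
        (fun y => φ y * (φ y * (gaussWeight u y * (aEl u y * logTilt u y i)))) x =
      2 * φ x * gaussWeight u x * (partialDeriv i φ x * (aEl u x * logTilt u x i)) +
        φ x ^ 2 * partialDeriv i (fun y => gaussWeight u y * (aEl u y * logTilt u y i)) x := by
    intro i
    rw [partialDeriv_mul hφ (hφ.mul (hF i)), partialDeriv_mul hφ (hF i)]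
    ring
  simp only [hterm, Finset.sum_add_distrib, ← Finset.mul_sum,
    hshr.weighted_divergence_logTilt hu]
  have hρ : 0 ≤ gaussWeight u x := (Real.exp_pos _).le
  have h := mul_nonneg hρ (cometric_log_bound hu x (φ x) fun i => partialDeriv i φ x)
  linarith

lemma ShrinkerEq.stability_base (hu : ContDiff ℝ (⊤ : ℕ∞) u) (hshr : ShrinkerEq u)
    {φ : E n → ℝ} (hφ : ContDiff ℝ (⊤ : ℕ∞) φ) (hφc : HasCompactSupport φ) :
    ∫ x, φ x ^ 2 * A2 u x * gaussWeight u x * aEl u x ≤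
      ∫ x, cometric u x (fun i => partialDeriv i φ x) * gaussWeight u x * aEl u x := by
  have ha := (contDiff_aEl hu).continuous
  have hρ := (contDiff_gaussWeight hu).continuous
  have hV : ∀ i, Continuous fun y => Vfield u y i :=
    fun i => (contDiff_Vfield_apply hu i).continuous
  have hDV : ∀ i k, Continuous (partialDeriv k fun y => Vfield u y i) :=
    fun i k => ((contDiff_Vfield_apply hu i).partialDeriv k).continuous
  have hDφ : ∀ i, Continuous (partialDeriv i φ) := fun i => (hφ.partialDeriv i).continuous
  have hFs : ∀ i, ContDiff ℝ (⊤ : ℕ∞)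
      fun y => φ y * (φ y * (gaussWeight u y * (aEl u y * logTilt u y i))) := fun i =>
    hφ.mul (hφ.mul ((contDiff_gaussWeight hu).mul ((contDiff_aEl hu).mul (contDiff_logTilt hu i))))
  have hFc : ∀ i, HasCompactSupport
      fun y => φ y * (φ y * (gaussWeight u y * (aEl u y * logTilt u y i))) := fun i =>
    hφc.mul_right
  have hA : Continuous (A2 u) := by
    rw [funext (A2_eq hu)]
    exact continuous_finsetSum _ fun j _ => continuous_finsetSum _ fun k _ =>
      (hDV j k).mul (hDV k j)
  have hleft : Integrable fun x => φ x ^ 2 * A2 u x * gaussWeight u x * aEl u x := by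
    refine ((((hφ.continuous.pow 2).mul hA).mul hρ).mul ha).integrable_of_hasCompactSupport ?_
    exact hφc.mono fun x hx h0 => hx (by simp [h0])
  have hdiv : ∀ i ∈ Finset.univ, Integrable (partialDeriv i
      fun y => φ y * (φ y * (gaussWeight u y * (aEl u y * logTilt u y i)))) := fun i _ =>
    ((hFs i).partialDeriv i).continuous.integrable_of_hasCompactSupport
      ((hFc i).fderiv_apply (𝕜 := ℝ) _)
  have hright : Integrable fun x =>
      cometric u x (fun i => partialDeriv i φ x) * gaussWeight u x * aEl u x := by
    have hcont : Continuous fun x => cometric u x fun i => partialDeriv i φ x :=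
      (continuous_finsetSum _ fun i _ => (hDφ i).pow 2).sub
        ((continuous_finsetSum _ fun i _ => (hV i).mul (hDφ i)).pow 2)
    refine ((hcont.mul hρ).mul ha).integrable_of_hasCompactSupport ?_
    refine (hφc.fderiv (𝕜 := ℝ)).mono fun x hx h0 => hx ?_
    simp [cometric, partialDeriv, h0]
  calc _ ≤ ∫ x, (∑ i, partialDeriv i
          (fun y => φ y * (φ y * (gaussWeight u y * (aEl u y * logTilt u y i)))) x +
        cometric u x (fun i => partialDeriv i φ x) * gaussWeight u x * aEl u x) :=
        integral_mono hleft ((integrable_finsetSum _ hdiv).add hright)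
          fun x => hshr.stability_pointwise hu hφ x
    _ = _ := by
        rw [integral_add (integrable_finsetSum _ hdiv) hright, integral_finsetSum _ hdiv,
          Finset.sum_eq_zero fun i _ => integral_partialDeriv_eq_zero (hFs i) (hFc i) i, zero_add]

end Stability

/-- weighted stability inequality for entire graphical self-shrinkers:
`∫_Σ η²|A|² e^{-|X|²/4} ≤ ∫_Σ |∇_Σ η|² e^{-|X|²/4}` for every smooth compactly
supported `η` on `ℝ^{n+1}` (integrals written via the area formula). -/
theorem stmt_5 (n : ℕ) (u : E n → ℝ) (hu : ContDiff ℝ (⊤ : ℕ∞) u) (hshr : ShrinkerEq u)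
    (η : E (n + 1) → ℝ) (hη : ContDiff ℝ (⊤ : ℕ∞) η) (hηc : HasCompactSupport η) :
    ∫ x : E n, (η (Pos u x)) ^ 2 * A2 u x *
        Real.exp (-‖Pos u x‖ ^ 2 / 4) * aEl u x ≤
      ∫ x : E n, ‖gradSigmaAmb u η x‖ ^ 2 *
        Real.exp (-‖Pos u x‖ ^ 2 / 4) * aEl u x := by
  simp only [norm_gradSigmaAmb_sq hu hη]
  exact hshr.stability_base hu (hη.comp (contDiff_Pos hu)) (hasCompactSupport_comp_Pos u hηc)
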